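/- arXiv:2209.04515 — 2 statements merged into one kernel-verified Lean document; each statement's English description precedes it below -/
import Mathlib

section
/- Let w be a scalar with |w| = 1 and B_w the map on eventually-zero sequences c₀₀ given by B_w x = w⁻¹(x_{k-1})_{k∈ℕ} (with x₀ := 0). Then for every x ∈ c₀₀, ‖B_wⁿ x‖ ≤ 2‖x‖₁/(n+1) in the X-norm; in particular B_wⁿ x → 0 as n → ∞. -/
open Filter Topology

/-- The norm of the complex space `X` (0-based: `x k` is the paper's
`x_{k+1}`). -/
noncomputable def normXC (x : ℕ → ℂ) : ℝ :=
  ∑' k : ℕ, ‖x (k + 1) / ((k : ℂ) + 2) - x k / ((k : ℂ) + 1)‖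

/-- `B_wⁿ x = w⁻ⁿ (x_{k-n})` (0-based; entries with index `< n` are `0`). -/
noncomputable def Bpow (w : ℂ) (n : ℕ) (x : ℕ → ℂ) : ℕ → ℂ :=
  fun k => if k < n then 0 else w⁻¹ ^ n * x (k - n)

/-- For `|w| = 1` and finitely supported `x`, the right-inverse orbit satisfies
`‖B_wⁿ x‖ ≤ 2 ‖x‖₁ / (n+1)` in the `X`-norm; in particular `B_wⁿ x → 0`. -/
theorem stmt_15 (w : ℂ) (hw : ‖w‖ = 1) (x : ℕ → ℂ)
    (hfin : ∃ N : ℕ, ∀ k, N ≤ k → x k = 0) :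
    (∀ n : ℕ, normXC (Bpow w n x) ≤ 2 * (∑' k : ℕ, ‖x k‖) / ((n : ℝ) + 1)) ∧
    Tendsto (fun n : ℕ => normXC (Bpow w n x)) atTop (𝓝 0) := by
  have hfinS : ∀ n : ℕ, normXC (Bpow w n x) ≤ 2 * (∑' k : ℕ, ‖x k‖) / ((n : ℝ) + 1) := by
    obtain ⟨N, hN⟩ := hfin
    intro n
    have hxs : Summable (fun k => ‖x k‖) := by
      apply summable_of_ne_finset_zero (s := Finset.range N)
      intro k hk
      rw [hN k (by simpa using hk), norm_zero]
    set a : ℕ → ℝ := fun k => ‖Bpow w n x k‖ / ((k : ℝ) + 1) with ha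
    have ha0 : ∀ k, 0 ≤ a k := fun k => by positivity
    have hshift : ∀ k, a (k + n) ≤ ‖x k‖ / ((n : ℝ) + 1) := by
      intro k
      have h1 : ‖Bpow w n x (k + n)‖ = ‖x k‖ := by
        simp [Bpow, hw]
      simp only [ha]
      rw [h1]
      push_cast
      gcongr
      linarith [(Nat.cast_nonneg k : (0 : ℝ) ≤ k)]
    have hs1 : Summable (fun k => a (k + n)) :=
      Summable.of_nonneg_of_le (fun k => ha0 _) hshift (hxs.div_const _)
    have hs : Summable a := (summable_nat_add_iff n).1 hs1
    have hs' : Summable (fun k => a (k + 1)) := (summable_nat_add_iff 1).2 hs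
    have hsum : ∑' k, a k ≤ (∑' k, ‖x k‖) / ((n : ℝ) + 1) := by
      rw [← hs.sum_add_tsum_nat_add n, Finset.sum_eq_zero, zero_add, ← tsum_div_const]
      · exact hs1.tsum_le_tsum hshift (hxs.div_const _)
      · intro k hk
        have : k < n := by simpa using hk
        simp [ha, Bpow, this]
    have hsum' : ∑' k, a (k + 1) ≤ ∑' k, a k := by
      rw [hs.tsum_eq_zero_add]
      linarith [ha0 0]
    have hterm : ∀ k : ℕ, ‖Bpow w n x (k + 1) / ((k : ℂ) + 2) - Bpow w n x k / ((k : ℂ) + 1)‖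
        ≤ a (k + 1) + a k := by
      intro k
      refine (norm_sub_le _ _).trans (le_of_eq ?_)
      have h1 : ‖(k : ℂ) + 1‖ = (k : ℝ) + 1 := by
        have := Complex.norm_natCast (k + 1)
        push_cast at this
        exact this
      have h2 : ‖(k : ℂ) + 2‖ = (k : ℝ) + 2 := by
        have := Complex.norm_natCast (k + 2)
        push_cast at this
        exact this
      simp only [ha, norm_div, h1, h2]
      push_cast
      ring_nf
    have hle : normXC (Bpow w n x) ≤ ∑' k, (a (k + 1) + a k) :=
      Summable.tsum_le_tsum hterm
        (Summable.of_nonneg_of_le (fun _ => norm_nonneg _) hterm (hs'.add hs)) (hs'.add hs)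
    rw [hs'.tsum_add hs] at hle
    rw [mul_div_assoc]
    linarith
  refine ⟨hfinS, ?_⟩
  refine squeeze_zero (fun n => tsum_nonneg fun k => norm_nonneg _) hfinS ?_
  exact (tendsto_const_nhds).div_atTop (tendsto_atTop_add_const_right _ _ tendsto_natCast_atTop_atTop)
end

section
/- Let A be the backward shift on the complex space X. The spectral radius of A equals 1; i.e., lim_{n→∞} ‖Aⁿ‖^{1/n} = lim_{n→∞} (n+1)^{1/n} = 1, and consequently σ(A) = {λ ∈ ℂ : |λ| ≤ 1}. -/
open Filter Topology

/-- Membership in the complex space `X` (0-based: `x k` is the paper's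
`x_{k+1}`). -/
def MemXC (x : ℕ → ℂ) : Prop :=
  Summable (fun k : ℕ => ‖x (k + 1) / ((k : ℂ) + 2) - x k / ((k : ℂ) + 1)‖) ∧
  Tendsto (fun k : ℕ => x k / ((k : ℂ) + 1)) atTop (𝓝 0)

lemma memXC_iff (x : ℕ → ℂ) : MemXC x ↔
    Summable (fun k : ℕ => ‖x (k + 1) / (((k + 1 : ℕ) : ℂ) + 1) - x k / ((k : ℂ) + 1)‖) ∧
    Tendsto (fun k : ℕ => x k / ((k : ℂ) + 1)) atTop (𝓝 0) := by
  unfold MemXC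
  have : ∀ k : ℕ, (((k + 1 : ℕ) : ℂ) + 1) = (k : ℂ) + 2 := by
    intro k; push_cast; ring
  simp only [this]

lemma cast_ne (k : ℕ) : ((k : ℂ) + 1) ≠ 0 := by exact_mod_cast Nat.succ_ne_zero k

lemma norm_cast_succ (k : ℕ) : ‖((k : ℂ) + 1)‖ = (k : ℝ) + 1 := by
  rw [← Nat.cast_succ, Complex.norm_natCast, Nat.cast_succ]

lemma summable_sq : Summable (fun k : ℕ => 1 / (((k : ℝ) + 1) * ((k : ℝ) + 1))) := by
  have h := (summable_nat_add_iff 1).2 (Real.summable_one_div_nat_pow (p := 2).2 (by norm_num))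
  refine h.congr ?_
  intro k; push_cast; ring

lemma memXC_of_summable {x : ℕ → ℂ} (h : Summable (fun k : ℕ => ‖x k / ((k : ℂ) + 1)‖)) :
    MemXC x := by
  rw [memXC_iff]
  refine ⟨?_, tendsto_zero_iff_norm_tendsto_zero.2 h.tendsto_atTop_zero⟩
  have h1 := (summable_nat_add_iff 1).2 h
  exact Summable.of_nonneg_of_le (fun _ => norm_nonneg _) (fun k => norm_sub_le _ _) (h1.add h)

lemma memXC_sub_smul {x y : ℕ → ℂ} (hx : MemXC x) (hy : MemXC y) (l : ℂ) :
    MemXC (fun k => x k - l * y k) := by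
  unfold MemXC at *
  refine ⟨?_, ?_⟩
  · refine Summable.of_nonneg_of_le (fun _ => norm_nonneg _) (fun k => ?_)
      (hx.1.add (hy.1.mul_left ‖l‖))
    rw [← norm_mul]
    refine le_trans (le_of_eq ?_) (norm_sub_le _ _)
    congr 1; ring
  · have := hx.2.sub (hy.2.const_mul l)
    simp only [mul_zero, sub_zero] at this
    refine this.congr (fun k => ?_)
    ring

lemma bdd_of_tendsto {w : ℕ → ℂ} (h : Tendsto w atTop (𝓝 0)) : ∃ C, 0 ≤ C ∧ ∀ k, ‖w k‖ ≤ C := by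
  obtain ⟨C, hC⟩ := (Metric.isBounded_range_of_tendsto w h).exists_norm_le
  exact ⟨C, (norm_nonneg _).trans (hC (w 0) ⟨0, rfl⟩), fun k => hC _ ⟨k, rfl⟩⟩

/-- difference of `w (k+1) / (k+1)` -/
lemma diff_bound {w : ℕ → ℂ} {C : ℝ} (hC : ∀ k, ‖w k‖ ≤ C) (k : ℕ) :
    ‖w (k + 2) / ((k : ℂ) + 2) - w (k + 1) / ((k : ℂ) + 1)‖ ≤
      ‖w (k + 2) - w (k + 1)‖ * (1 / ((k : ℝ) + 2)) + C * (1 / (((k : ℝ) + 1) * ((k : ℝ) + 1))) := by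
  have h1 := cast_ne k
  have h2 : (k : ℂ) + 2 ≠ 0 := by
    have := cast_ne (k + 1); push_cast at this; convert this using 1; ring
  have n2 : ‖(k : ℂ) + 2‖ = (k : ℝ) + 2 := by
    have := norm_cast_succ (k + 1); push_cast at this
    convert this using 1
    · congr 1; ring
    · ring
  have e : w (k + 2) / ((k : ℂ) + 2) - w (k + 1) / ((k : ℂ) + 1) =
      (w (k + 2) - w (k + 1)) / ((k : ℂ) + 2) - w (k + 1) / (((k : ℂ) + 1) * ((k : ℂ) + 2)) := by
    field_simp; ring
  rw [e]
  refine (norm_sub_le _ _).trans ?_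
  rw [norm_div, norm_div, norm_mul, n2, norm_cast_succ]
  have a : ‖w (k + 1)‖ / (((k : ℝ) + 1) * ((k : ℝ) + 2)) ≤ C / (((k : ℝ) + 1) * ((k : ℝ) + 1)) := by
    have := hC (k + 1)
    have := (norm_nonneg _).trans this
    gcongr
    · norm_num
  rw [mul_one_div, mul_one_div]
  gcongr

lemma memXC_shift {x : ℕ → ℂ} (hx : MemXC x) : MemXC (fun k => x (k + 1)) := by
  rw [memXC_iff] at *
  obtain ⟨w, hw⟩ : ∃ w : ℕ → ℂ, w = fun k : ℕ => x k / ((k : ℂ) + 1) := ⟨_, rfl⟩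
  have hs : Summable (fun k : ℕ => ‖w (k + 1) - w k‖) := by rw [hw]; exact hx.1
  have ht : Tendsto w atTop (𝓝 0) := by rw [hw]; exact hx.2
  obtain ⟨C, hC0, hC⟩ := bdd_of_tendsto ht
  have e : ∀ k : ℕ, x (k + 1) / ((k : ℂ) + 1) = w (k + 1) + w (k + 1) / ((k : ℂ) + 1) := by
    intro k
    have h1 := cast_ne k
    have h2 := cast_ne (k + 1)
    rw [hw]; push_cast at h2 ⊢; field_simp
  refine ⟨?_, ?_⟩
  · have hs1 := (summable_nat_add_iff 1).2 hs
    refine Summable.of_nonneg_of_le (fun _ => norm_nonneg _) (fun k => ?_)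
      ((hs1.add hs1).add (summable_sq.mul_left C))
    have := diff_bound hC k
    rw [e, e]
    have e2 : (((k + 1 : ℕ) : ℂ) + 1) = (k : ℂ) + 2 := by push_cast; ring
    rw [e2]
    calc _ = ‖(w (k + 2) - w (k + 1)) + (w (k + 2) / ((k : ℂ) + 2) - w (k + 1) / ((k : ℂ) + 1))‖ := by
            congr 1; ring
      _ ≤ _ := norm_add_le _ _
      _ ≤ ‖w (k + 2) - w (k + 1)‖ + (‖w (k + 2) - w (k + 1)‖ + C * (1 / (((k : ℝ) + 1) * ((k : ℝ) + 1)))) := by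
        gcongr
        refine this.trans ?_
        gcongr
        refine mul_le_of_le_one_right (norm_nonneg _) ?_
        rw [div_le_one (by positivity)]
        have : (0 : ℝ) ≤ k := k.cast_nonneg
        linarith
      _ = _ := by ring
  · have h1 : Tendsto (fun k => w (k + 1)) atTop (𝓝 0) := (tendsto_add_atTop_iff_nat 1).2 ht
    refine squeeze_zero_norm (a := fun k => ‖w (k + 1)‖ + ‖w (k + 1)‖) (fun k => ?_) ?_
    · rw [e]
      refine (norm_add_le _ _).trans ?_
      gcongr
      rw [norm_div, norm_cast_succ]
      refine div_le_self (norm_nonneg _) ?_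
      have : (0 : ℝ) ≤ k := k.cast_nonneg
      linarith
    · simpa using h1.norm.add h1.norm

lemma limit_part :
    Tendsto (fun n : ℕ => ((n : ℝ) + 1) ^ ((n : ℝ)⁻¹)) atTop (𝓝 1) := by
  have h := tendsto_rpow_div_mul_add 1 1 (-1) (by norm_num)
  have h2 : Tendsto (fun n : ℕ => (n : ℝ) + 1) atTop atTop :=
    tendsto_atTop_add_const_right _ _ tendsto_natCast_atTop_atTop
  refine (h.comp h2).congr (fun n => ?_)
  simp

/-- in the boundary case, membership forces absolute summability -/
lemma summable_of_boundary {l : ℂ} (hl : l ≠ 1) {x : ℕ → ℂ} (hx : MemXC x)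
    (hy : Summable (fun k : ℕ => ‖(x (k + 1) - l * x k) / ((k : ℂ) + 1)‖)) :
    Summable (fun k : ℕ => ‖x k / ((k : ℂ) + 1)‖) := by
  rw [memXC_iff] at hx
  obtain ⟨w, hw⟩ : ∃ w : ℕ → ℂ, w = fun k : ℕ => x k / ((k : ℂ) + 1) := ⟨_, rfl⟩
  have hs : Summable (fun k : ℕ => ‖w (k + 1) - w k‖) := by rw [hw]; exact hx.1
  have hd : 0 < ‖l - 1‖ := norm_pos_iff.2 (sub_ne_zero.2 hl)
  change Summable (fun k : ℕ => ‖(fun k : ℕ => x k / ((k : ℂ) + 1)) k‖)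
  rw [← hw]
  have hsum := (((hs.mul_left 2).add hy).mul_left (2 / ‖l - 1‖))
  have hsmall : ∀ᶠ k : ℕ in atTop, 1 / ((k : ℝ) + 1) < ‖l - 1‖ / 2 :=
    tendsto_one_div_add_atTop_nhds_zero_nat.eventually_lt_const (by positivity)
  refine Summable.of_norm_bounded_eventually_nat hsum ?_
  filter_upwards [hsmall] with k hk
  rw [norm_norm]
  have e : (l - 1) * w k = (w (k + 1) - w k) + w (k + 1) / ((k : ℂ) + 1)
      - (x (k + 1) - l * x k) / ((k : ℂ) + 1) := by
    have h1 := cast_ne k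
    have h2 := cast_ne (k + 1)
    rw [hw]; push_cast at h2 ⊢; field_simp; ring
  have b1 : ‖l - 1‖ * ‖w k‖ ≤ ‖w (k + 1) - w k‖ + ‖w (k + 1)‖ * (1 / ((k : ℝ) + 1))
      + ‖(x (k + 1) - l * x k) / ((k : ℂ) + 1)‖ := by
    rw [← norm_mul, e]
    refine (norm_sub_le _ _).trans ?_
    gcongr
    refine (norm_add_le _ _).trans ?_
    rw [norm_div (w (k + 1)), norm_cast_succ, mul_one_div]
  have b2 : ‖w (k + 1)‖ ≤ ‖w (k + 1) - w k‖ + ‖w k‖ := by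
    simpa using norm_add_le (w (k + 1) - w k) (w k)
  have b3 : 1 / ((k : ℝ) + 1) ≤ 1 := by
    rw [div_le_one (by positivity)]
    have : (0 : ℝ) ≤ k := k.cast_nonneg
    linarith
  have b4 : ‖w (k + 1)‖ * (1 / ((k : ℝ) + 1)) ≤ ‖w (k + 1) - w k‖ + ‖w k‖ * (‖l - 1‖ / 2) := by
    have p : 0 ≤ 1 / ((k : ℝ) + 1) := by positivity
    calc _ ≤ (‖w (k + 1) - w k‖ + ‖w k‖) * (1 / ((k : ℝ) + 1)) := by gcongr
      _ = ‖w (k + 1) - w k‖ * (1 / ((k : ℝ) + 1)) + ‖w k‖ * (1 / ((k : ℝ) + 1)) := by ring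
      _ ≤ ‖w (k + 1) - w k‖ * 1 + ‖w k‖ * (‖l - 1‖ / 2) := by gcongr
      _ = _ := by ring
  rw [div_mul_eq_mul_div, le_div_iff₀ hd]
  linarith

lemma boundary_not_surj {l : ℂ} (hn : ‖l‖ = 1) (hl : l ≠ 1) :
    ¬ Set.BijOn (fun (x : ℕ → ℂ) => fun k => x (k + 1) - l * x k)
        {x | MemXC x} {x | MemXC x} := by
  intro hb
  have hys : Summable (fun k : ℕ => ‖(l ^ (k + 1) / ((k : ℂ) + 1)) / ((k : ℂ) + 1)‖) := by
    refine summable_sq.congr (fun k => ?_)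
    rw [norm_div, norm_div, norm_pow, hn, norm_cast_succ, one_pow, div_div]
  obtain ⟨x, hx, hxy⟩ := hb.surjOn (memXC_of_summable hys)
  have hxy' : ∀ k, x (k + 1) - l * x k = l ^ (k + 1) / ((k : ℂ) + 1) := fun k => congrFun hxy k
  have hs := summable_of_boundary hl hx (by simpa only [hxy'] using hys)
  have hform : ∀ k, x k = l ^ k * (x 0 + ((∑ i ∈ Finset.range k, 1 / ((i : ℝ) + 1) : ℝ) : ℂ)) := by
    intro k
    induction k with
    | zero => simp
    | succ k ih =>
      rw [eq_add_of_sub_eq (hxy' k), ih, Finset.sum_range_succ]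
      push_cast
      ring
  have hev : ∀ᶠ k : ℕ in atTop, ‖x 0‖ + 1 ≤ ∑ i ∈ Finset.range k, 1 / ((i : ℝ) + 1) :=
    Real.tendsto_sum_range_one_div_nat_succ_atTop.eventually_ge_atTop _
  have hdiv : Summable (fun k : ℕ => 1 / ((k : ℝ) + 1)) := by
    refine Summable.of_norm_bounded_eventually_nat hs ?_
    filter_upwards [hev] with k hk
    rw [norm_div (x k), norm_cast_succ, Real.norm_of_nonneg (by positivity)]
    gcongr
    rw [hform, norm_mul, norm_pow, hn, one_pow, one_mul]
    have h0 : 0 ≤ ∑ i ∈ Finset.range k, 1 / ((i : ℝ) + 1) := Finset.sum_nonneg (fun i _ => by positivity)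
    have := norm_sub_le (x 0 + ((∑ i ∈ Finset.range k, 1 / ((i : ℝ) + 1) : ℝ) : ℂ)) (x 0)
    rw [add_sub_cancel_left, Complex.norm_real, Real.norm_of_nonneg h0] at this
    linarith
  refine Real.not_summable_one_div_natCast ((summable_nat_add_iff 1).1 (hdiv.congr ?_))
  intro k; push_cast; rfl

lemma memXC_zero : MemXC (fun _ => 0) := by
  apply memXC_of_summable; simp

lemma inside_not_inj {l : ℂ} (h : MemXC (fun k => l ^ k)) :
    ¬ Set.BijOn (fun (x : ℕ → ℂ) => fun k => x (k + 1) - l * x k)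
        {x | MemXC x} {x | MemXC x} := by
  intro hb
  have e : (fun k : ℕ => l ^ (k + 1) - l * l ^ k) = fun _ : ℕ => (0 : ℂ) - l * 0 := by
    funext k; ring
  have h2 : (fun k : ℕ => l ^ k) = fun _ : ℕ => (0 : ℂ) := hb.injOn h memXC_zero e
  have h3 : l ^ 0 = (0 : ℂ) := congrFun h2 0
  rw [pow_zero] at h3
  exact one_ne_zero h3

lemma memXC_pow {l : ℂ} (h : ‖l‖ < 1) : MemXC (fun k => l ^ k) := by
  apply memXC_of_summable
  refine Summable.of_nonneg_of_le (fun _ => norm_nonneg _) (fun k => ?_)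
    (summable_geometric_of_lt_one (norm_nonneg l) h)
  rw [norm_div, norm_pow, norm_cast_succ]
  refine div_le_self (by positivity) ?_
  have : (0 : ℝ) ≤ k := k.cast_nonneg
  linarith

lemma memXC_one : MemXC (fun k => (1 : ℂ) ^ k) := by
  rw [memXC_iff]
  refine ⟨?_, ?_⟩
  · refine Summable.of_nonneg_of_le (fun _ => norm_nonneg _) (fun k => ?_) summable_sq
    have h1 := cast_ne k
    have h2 := cast_ne (k + 1)
    have e : (1 : ℂ) ^ (k + 1) / (((k + 1 : ℕ) : ℂ) + 1) - 1 ^ k / ((k : ℂ) + 1)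
        = - (1 / ((((k + 1 : ℕ) : ℂ) + 1) * ((k : ℂ) + 1))) := by
      push_cast at h2 ⊢; field_simp; ring
    rw [e, norm_neg, norm_div, norm_mul, norm_cast_succ, norm_cast_succ, norm_one]
    push_cast
    gcongr
    linarith
  · simpa using tendsto_one_div_add_atTop_nhds_zero_nat (𝕜 := ℂ)

lemma outside_inj {l : ℂ} (hl : 1 < ‖l‖) {z : ℕ → ℂ} (hz : MemXC z)
    (h : ∀ k, z (k + 1) = l * z k) : ∀ k, z k = 0 := by
  have hf : ∀ k, z k = l ^ k * z 0 := by
    intro k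
    induction k with
    | zero => simp
    | succ k ih => rw [h, ih]; ring
  have hl0 : l ≠ 0 := by rintro rfl; simp at hl; linarith
  have hr : ‖l⁻¹‖ < 1 := by rw [norm_inv]; exact inv_lt_one_of_one_lt₀ hl
  have t1 : Tendsto (fun k : ℕ => ((k : ℂ) + 1) * l⁻¹ ^ k) atTop (𝓝 0) := by
    have a := (summable_pow_mul_geometric_of_norm_lt_one 1 hr).tendsto_atTop_zero
    have b := (tendsto_pow_atTop_nhds_zero_of_norm_lt_one hr)
    have := a.add b
    simp only [add_zero] at this
    refine this.congr (fun k => ?_)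
    ring
  have t2 := hz.2.mul t1
  have t3 : Tendsto (fun _ : ℕ => z 0) atTop (𝓝 (0 * 0)) := by
    refine t2.congr (fun k => ?_)
    have := cast_ne k
    rw [hf k, inv_pow]
    field_simp
  have : z 0 = 0 := by simpa using tendsto_nhds_unique tendsto_const_nhds t3
  intro k; rw [hf, this, mul_zero]

/-- absorption -/
lemma absorb {a b : ℕ → ℝ} {L M : ℝ} (hL : 1 < L) (ha : ∀ k, 0 ≤ a k) (hM : ∀ k, a k ≤ M)
    (hb0 : ∀ k, 0 ≤ b k) (hb : Summable b)
    (h : ∀ k : ℕ, L * a k ≤ a (k + 1) * (1 + 1 / ((k : ℝ) + 2)) + b k) : Summable a := by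
  obtain ⟨q, hq⟩ : ∃ q, q = (L + 1) / 2 := ⟨_, rfl⟩
  have hsmall : ∀ᶠ k : ℕ in atTop, 1 / ((k : ℝ) + 1) < (L - 1) / 2 :=
    tendsto_one_div_add_atTop_nhds_zero_nat.eventually_lt_const (by linarith)
  obtain ⟨K, hK⟩ := eventually_atTop.1 hsmall
  rw [← summable_nat_add_iff K]
  have hbK := (summable_nat_add_iff K).2 hb
  refine summable_of_sum_range_le (c := (q * M + ∑' k, b (k + K)) / (L - q)) (fun k => ha _) ?_
  intro n
  rw [le_div_iff₀ (by linarith)]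
  have step : ∀ k, L * a (k + K) ≤ q * a (k + 1 + K) + b (k + K) := by
    intro k
    refine (h (k + K)).trans ?_
    have e : k + K + 1 = k + 1 + K := by ring
    rw [e, mul_comm]
    gcongr
    · exact ha _
    have := hK (k + K) (by omega)
    have : 1 / (((k + K : ℕ) : ℝ) + 2) ≤ 1 / (((k + K : ℕ) : ℝ) + 1) := by gcongr; norm_num
    linarith
  have s1 := Finset.sum_le_sum (s := Finset.range n) (fun k _ => step k)
  rw [Finset.sum_add_distrib, ← Finset.mul_sum, ← Finset.mul_sum] at s1
  have s2 := hbK.sum_le_tsum (Finset.range n) (fun k _ => hb0 _)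
  have s3 : ∑ k ∈ Finset.range n, a (k + 1 + K) ≤ ∑ k ∈ Finset.range n, a (k + K) + M := by
    have e1 := Finset.sum_range_succ (fun k => a (k + K)) n
    have e2 := Finset.sum_range_succ' (fun k => a (k + K)) n
    have := hM (n + K)
    have := ha (0 + K)
    linarith
  have hq0 : 0 ≤ q := by linarith
  have := mul_le_mul_of_nonneg_left s3 hq0
  linarith

lemma outside_surj {l : ℂ} (hl : 1 < ‖l‖) {y : ℕ → ℂ} (hy : MemXC y) :
    ∃ x, MemXC x ∧ ∀ k, x (k + 1) - l * x k = y k := by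
  have hl0 : l ≠ 0 := by rintro rfl; simp at hl; linarith
  rw [memXC_iff] at hy
  obtain ⟨v, hv⟩ : ∃ v : ℕ → ℂ, v = fun k : ℕ => y k / ((k : ℂ) + 1) := ⟨_, rfl⟩
  have hs : Summable (fun k : ℕ => ‖v (k + 1) - v k‖) := by rw [hv]; exact hy.1
  have ht : Tendsto v atTop (𝓝 0) := by rw [hv]; exact hy.2
  have hyv : ∀ k, y k = ((k : ℂ) + 1) * v k := by
    intro k; have := cast_ne k; rw [hv]; field_simp
  obtain ⟨C, hC0, hC⟩ := bdd_of_tendsto ht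
  have hr : ‖l‖⁻¹ < 1 := inv_lt_one_of_one_lt₀ hl
  have hr' : ‖(‖l‖⁻¹)‖ < 1 := by rwa [norm_inv, norm_norm]
  have hgeo : Summable (fun j : ℕ => ((j : ℝ) + 1) * ‖l‖⁻¹ ^ (j + 1)) := by
    have a := summable_pow_mul_geometric_of_norm_lt_one 1 hr'
    have := (summable_nat_add_iff 1).2 a
    refine this.congr (fun k => ?_)
    push_cast; ring
  -- terms
  have hterm : ∀ k j : ℕ, ‖l⁻¹ ^ (j + 1) * y (k + j) / ((k : ℂ) + 1)‖ ≤
      ((j : ℝ) + 1) * ‖l‖⁻¹ ^ (j + 1) * ‖v (k + j)‖ := by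
    intro k j
    rw [hyv, norm_div, norm_mul, norm_mul, norm_pow, norm_inv, norm_cast_succ, norm_cast_succ,
      div_le_iff₀ (by positivity)]
    have : ((k + j : ℕ) : ℝ) + 1 ≤ ((j : ℝ) + 1) * ((k : ℝ) + 1) := by
      push_cast
      have : (0 : ℝ) ≤ (j : ℝ) * k := by positivity
      nlinarith
    calc _ = (((k + j : ℕ) : ℝ) + 1) * (‖l‖⁻¹ ^ (j + 1) * ‖v (k + j)‖) := by ring
      _ ≤ (((j : ℝ) + 1) * ((k : ℝ) + 1)) * (‖l‖⁻¹ ^ (j + 1) * ‖v (k + j)‖) := by gcongr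
      _ = _ := by ring
  have hterm2 : ∀ k j : ℕ, ‖l⁻¹ ^ (j + 1) * y (k + j) / ((k : ℂ) + 1)‖ ≤
      ((j : ℝ) + 1) * ‖l‖⁻¹ ^ (j + 1) * C := by
    intro k j
    refine (hterm k j).trans ?_
    gcongr
    exact hC _
  have hsumm0 : ∀ k, Summable (fun j : ℕ => l⁻¹ ^ (j + 1) * y (k + j) / ((k : ℂ) + 1)) :=
    fun k => Summable.of_norm_bounded (hgeo.mul_right C) (hterm2 k)
  have hsumm : ∀ k, Summable (fun j : ℕ => l⁻¹ ^ (j + 1) * y (k + j)) := by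
    intro k
    refine ((hsumm0 k).mul_right ((k : ℂ) + 1)).congr (fun j => ?_)
    rw [div_mul_cancel₀ _ (cast_ne k)]
  obtain ⟨x, hxdef⟩ : ∃ x : ℕ → ℂ, x = fun k => - ∑' j : ℕ, l⁻¹ ^ (j + 1) * y (k + j) := ⟨_, rfl⟩
  have hrec : ∀ k, x (k + 1) - l * x k = y k := by
    intro k
    have h0 := (hsumm k).tsum_eq_zero_add
    have h1 : ∑' j : ℕ, l⁻¹ ^ (j + 1) * y (k + 1 + j) =
        l * ∑' j : ℕ, l⁻¹ ^ (j + 1 + 1) * y (k + (j + 1)) := by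
      rw [← tsum_mul_left]
      congr 1; funext j
      rw [show k + 1 + j = k + (j + 1) by ring, pow_succ l⁻¹ (j + 1)]
      field_simp
    rw [hxdef]
    simp only
    rw [h0, h1, zero_add, pow_one, add_zero]
    field_simp
    ring
  obtain ⟨w, hw⟩ : ∃ w : ℕ → ℂ, w = fun k : ℕ => x k / ((k : ℂ) + 1) := ⟨_, rfl⟩
  have hwt : Tendsto w atTop (𝓝 0) := by
    have key : Tendsto (fun k : ℕ => ∑' j : ℕ, l⁻¹ ^ (j + 1) * y (k + j) / ((k : ℂ) + 1)) atTop
        (𝓝 (∑' j : ℕ, (0 : ℂ))) := by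
      refine tendsto_tsum_of_dominated_convergence (hgeo.mul_right C) (fun j => ?_)
        (Eventually.of_forall hterm2)
      refine squeeze_zero_norm (fun k => hterm k j) ?_
      have : Tendsto (fun k => v (k + j)) atTop (𝓝 0) := (tendsto_add_atTop_iff_nat j).2 ht
      simpa using this.norm.const_mul (((j : ℝ) + 1) * ‖l‖⁻¹ ^ (j + 1))
    rw [tsum_zero] at key
    have := key.neg
    rw [neg_zero] at this
    refine this.congr (fun k => ?_)
    rw [hw, hxdef, tsum_div_const]
    simp only
    ring
  obtain ⟨D, hD0, hD⟩ := bdd_of_tendsto hwt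
  have hwrec : ∀ k : ℕ, l * w k = w (k + 1) + w (k + 1) / ((k : ℂ) + 1) - v k := by
    intro k
    have h1 := cast_ne k
    have h2 := cast_ne (k + 1)
    rw [hw, hv]; simp only; rw [← hrec k]; push_cast at h2 ⊢; field_simp; ring
  have hws : Summable (fun k : ℕ => ‖w (k + 1) - w k‖) := by
    refine absorb (M := D + D) hl (fun _ => norm_nonneg _)
      (fun k => (norm_sub_le _ _).trans (add_le_add (hD _) (hD _)))
      (b := fun k : ℕ => D * (1 / (((k : ℝ) + 1) * ((k : ℝ) + 1))) + ‖v (k + 1) - v k‖)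
      (fun k => by positivity) ((summable_sq.mul_left D).add hs) (fun k => ?_)
    have e2 : (((k + 1 : ℕ) : ℂ) + 1) = (k : ℂ) + 2 := by push_cast; ring
    have e : l * (w (k + 1) - w k) = (w (k + 2) - w (k + 1)) +
        (w (k + 2) / ((k : ℂ) + 2) - w (k + 1) / ((k : ℂ) + 1)) - (v (k + 1) - v k) := by
      rw [mul_sub, hwrec, hwrec, e2]; ring
    have d := diff_bound hD k
    rw [← norm_mul, e]
    refine (norm_sub_le _ _).trans ?_
    have := norm_add_le (w (k + 2) - w (k + 1))
      (w (k + 2) / ((k : ℂ) + 2) - w (k + 1) / ((k : ℂ) + 1))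
    change _ ≤ ‖w (k + 2) - w (k + 1)‖ * _ + _
    linarith
  refine ⟨x, ?_, hrec⟩
  rw [memXC_iff]
  rw [hw] at hws hwt
  exact ⟨hws, hwt⟩

lemma outside_bij {l : ℂ} (hl : 1 < ‖l‖) :
    Set.BijOn (fun (x : ℕ → ℂ) => fun k => x (k + 1) - l * x k)
        {x | MemXC x} {x | MemXC x} := by
  refine ⟨?_, ?_, ?_⟩
  · intro x hx
    exact memXC_sub_smul (memXC_shift hx) hx l
  · intro x hx x' hx' h
    have hz := memXC_sub_smul hx hx' 1
    have := outside_inj hl hz (fun k => by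
      have := congrFun h k
      simp only at this
      linear_combination this)
    funext k
    have := this k
    linear_combination this
  · intro y hy
    obtain ⟨x, hx, h⟩ := outside_surj hl hy
    exact ⟨x, hx, funext h⟩

/-- The spectral radius of the backward shift `A` on the complex space `X`
equals `1`: since `‖Aⁿ‖ = n + 1`, `‖Aⁿ‖^{1/n} = (n+1)^{1/n} → 1`; consequently
`σ(A)` is the closed unit disk: `λ ∈ σ(A)` (i.e., `A - λI` fails to be a
bijection of `X` onto itself) iff `|λ| ≤ 1`. -/
theorem stmt_17 :
    Tendsto (fun n : ℕ => ((n : ℝ) + 1) ^ ((n : ℝ)⁻¹)) atTop (𝓝 1) ∧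
    (∀ l : ℂ, ‖l‖ ≤ 1 ↔
      ¬ Set.BijOn (fun (x : ℕ → ℂ) => fun k => x (k + 1) - l * x k)
        {x | MemXC x} {x | MemXC x}) := by
  refine ⟨limit_part, fun l => ⟨fun h => ?_, fun h => ?_⟩⟩
  · rcases h.lt_or_eq with h | h
    · exact inside_not_inj (memXC_pow h)
    · by_cases h1 : l = 1
      · subst h1; exact inside_not_inj memXC_one
      · exact boundary_not_surj h h1
  · by_contra hc
    exact h (outside_bij (not_le.1 hc))
end
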